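/- arXiv:1001.1369 — 2 statements merged into one kernel-verified Lean document; each statement's English description precedes it below -/
import Mathlib

section
/- Let d ≥ 1 and let x_1, …, x_{d+1} ∈ ℝ^d be affinely independent points, let τ = conv{x_1, …, x_{d+1}} be the closed simplex with these vertices, and let |τ| denote its d-dimensional Lebesgue measure. Then for every affine function g : ℝ^d → ℝ, the element mass-matrix formula holds: ∫_τ g(x)² dx = (|τ| / ((d+1)(d+2))) · ( ∑_{i=1}^{d+1} g(x_i)² + ( ∑_{i=1}^{d+1} g(x_i) )² ). -/
open MeasureTheory

/-!
Let `λᵢ` be the barycentric coordinates of `τ`. Since `g = ∑ g(xᵢ) λᵢ` for affine `g`, everything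
reduces to the moments `Mᵢⱼ = ∫_τ λᵢ λⱼ`. Bisecting `τ` at the midpoint of the edge `xᵢ xⱼ` gives
two halves, each an affine image of `τ` with Jacobian `1/2`, so `∫_τ` is the average of its
pull-backs under these two affine maps. Applied to `λᵢ λⱼ` and `λᵢ²` this yields
`4 Mᵢⱼ = Mᵢᵢ + Mⱼⱼ` and `Mᵢᵢ = Mⱼⱼ`; as the `λᵢ` sum to one, the `Mᵢⱼ` sum to `|τ|`, which fixes
the remaining scalar.
-/

section Affine

variable {ι k V P : Type*} [CommRing k] [AddCommGroup V] [Module k V] [AddTorsor V P]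

theorem affineMap_eq_sum_coord_smul {W : Type*} [AddCommGroup W] [Module k W] [Fintype ι]
    (b : AffineBasis ι k P) (f : P →ᵃ[k] W) (y : P) :
    f y = ∑ i, b.coord i y • f (b i) := by
  conv_lhs => rw [← b.affineCombination_coord_eq_self y]
  rw [Finset.univ.map_affineCombination _ _ (b.sum_coord_apply_eq_one y),
    Finset.affineCombination_eq_linear_combination _ _ _ (b.sum_coord_apply_eq_one y)]
  rfl

/-- The affine map sending the point `b i` of an affine basis to `p` and fixing all its other
points. Its linear part is a transvection, so its determinant is available from the library. -/
noncomputable def moveVertex (b : AffineBasis ι k P) (i : ι) (p : P) : P →ᵃ[k] P where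
  toFun y := b.coord i y • (p -ᵥ b i) +ᵥ y
  linear := LinearMap.transvection (b.coord i).linear (p -ᵥ b i)
  map_vadd' y v := by
    simp only [AffineMap.map_vadd, LinearMap.transvection.apply, vadd_vadd, vadd_eq_add, add_smul]
    congr 1
    abel

theorem coord_moveVertex (b : AffineBasis ι k P) (i j : ι) (p y : P) :
    b.coord j (moveVertex b i p y) =
      b.coord j y + b.coord i y * (b.coord j p - b.coord j (b i)) := by
  change b.coord j (b.coord i y • (p -ᵥ b i) +ᵥ y) = _
  rw [AffineMap.map_vadd, map_smul, AffineMap.linearMap_vsub, smul_eq_mul, vsub_eq_sub,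
    vadd_eq_add, add_comm]

theorem det_linear_moveVertex [Module.Free k V] [Module.Finite k V] (b : AffineBasis ι k P)
    (i : ι) (p : P) : LinearMap.det (moveVertex b i p).linear = b.coord i p := by
  change LinearMap.det (LinearMap.transvection (b.coord i).linear (p -ᵥ b i)) = _
  rw [LinearMap.transvection.det, AffineMap.linearMap_vsub, b.coord_apply_eq, vsub_eq_sub,
    add_sub_cancel]

end Affine

section Bisection

variable {ι V P : Type*} [AddCommGroup V] [Module ℝ V] [AddTorsor V P]

/-- The affine map replacing the vertex `b i` of a simplex by the midpoint of `b i` and `b j`. It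
maps the simplex onto the half `b.coord i ≤ b.coord j`, the one that contains `b j`. -/
noncomputable def bisection (b : AffineBasis ι ℝ P) (i j : ι) : P →ᵃ[ℝ] P :=
  moveVertex b i (midpoint ℝ (b i) (b j))

theorem coord_bisection (b : AffineBasis ι ℝ P) (i j k : ι) (y : P) :
    b.coord k (bisection b i j y) =
      b.coord k y + b.coord i y * (b.coord k (b j) - b.coord k (b i)) / 2 := by
  rw [bisection, coord_moveVertex, AffineMap.map_midpoint, midpoint_eq_smul_add, invOf_eq_inv,
    smul_eq_mul]
  ring

theorem coord_bisection_left (b : AffineBasis ι ℝ P) {i j : ι} (hij : i ≠ j) (y : P) :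
    b.coord i (bisection b i j y) = b.coord i y / 2 := by
  rw [coord_bisection, b.coord_apply_ne hij, b.coord_apply_eq]
  ring

theorem coord_bisection_right (b : AffineBasis ι ℝ P) {i j : ι} (hij : i ≠ j) (y : P) :
    b.coord j (bisection b i j y) = b.coord j y + b.coord i y / 2 := by
  rw [coord_bisection, b.coord_apply_ne hij.symm, b.coord_apply_eq]
  ring

theorem coord_bisection_of_ne (b : AffineBasis ι ℝ P) {i j k : ι} (hki : k ≠ i) (hkj : k ≠ j)
    (y : P) : b.coord k (bisection b i j y) = b.coord k y := by
  rw [coord_bisection, b.coord_apply_ne hki, b.coord_apply_ne hkj]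
  ring

theorem det_linear_bisection [FiniteDimensional ℝ V] (b : AffineBasis ι ℝ P) {i j : ι}
    (hij : i ≠ j) : LinearMap.det (bisection b i j).linear = 1 / 2 := by
  rw [bisection, det_linear_moveVertex, AffineMap.map_midpoint, b.coord_apply_eq,
    b.coord_apply_ne hij, midpoint_eq_smul_add, invOf_eq_inv, smul_eq_mul]
  norm_num

theorem bisection_preimage_half {E : Type*} [AddCommGroup E] [Module ℝ E] (b : AffineBasis ι ℝ E)
    {i j : ι} (hij : i ≠ j) :
    bisection b i j ⁻¹' (convexHull ℝ (Set.range b) ∩ {y | b.coord i y ≤ b.coord j y}) =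
      convexHull ℝ (Set.range b) := by
  ext y
  simp only [b.convexHull_eq_nonneg_coord, Set.mem_preimage, Set.mem_inter_iff, Set.mem_ofPred_eq,
    coord_bisection_left b hij, coord_bisection_right b hij]
  constructor
  · rintro ⟨hnonneg, hle⟩ k
    rcases eq_or_ne k i with rfl | hki
    · have := hnonneg k
      rw [coord_bisection_left b hij] at this
      linarith
    rcases eq_or_ne k j with rfl | hkj
    · linarith
    · simpa only [coord_bisection_of_ne b hki hkj] using hnonneg k
  · refine fun hnonneg => ⟨fun k => ?_, by linarith [hnonneg j]⟩
    rcases eq_or_ne k i with rfl | hki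
    · rw [coord_bisection_left b hij]
      linarith [hnonneg k]
    rcases eq_or_ne k j with rfl | hkj
    · rw [coord_bisection_right b hij]
      linarith [hnonneg i, hnonneg k]
    · simpa only [coord_bisection_of_ne b hki hkj] using hnonneg k

end Bisection

section Measure

variable {ι E : Type*} [NormedAddCommGroup E] [NormedSpace ℝ E] [FiniteDimensional ℝ E]
  [MeasurableSpace E] [BorelSpace E] (μ : Measure E) [μ.IsAddHaarMeasure]

theorem map_affineMap_addHaar_eq_smul_addHaar {f : E →ᵃ[ℝ] E}
    (hf : LinearMap.det f.linear ≠ 0) :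
    μ.map f = ENNReal.ofReal |(LinearMap.det f.linear)⁻¹| • μ := by
  rw [f.decomp, show (f.linear : E → E) + (fun _ => f 0) = (· + f 0) ∘ f.linear from rfl,
    ← Measure.map_map (measurable_add_const _)
      f.linear.continuous_of_finiteDimensional.measurable,
    Measure.map_linearMap_addHaar_eq_smul_addHaar μ hf, Measure.map_smul, map_add_right_eq_self]

theorem addHaar_setOf_affineMap_eq {W : Type*} [AddCommGroup W] [Module ℝ W] {f g : E →ᵃ[ℝ] W}
    (hfg : f ≠ g) : μ {y | f y = g y} = 0 := by
  let S : AffineSubspace ℝ E := (AffineSubspace.mk' (0 : W) ⊥).comap (f - g)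
  have hS : {y | f y = g y} = (S : Set E) := by
    ext y
    simp [S, sub_eq_zero]
  rw [hS]
  refine Measure.addHaar_affineSubspace μ S fun htop => hfg ?_
  ext y
  have hy : y ∈ (S : Set E) := htop ▸ AffineSubspace.mem_top ℝ E y
  rwa [← hS] at hy

theorem addHaar_convexHull_range_of_not_affineIndependent [Fintype ι] {x : ι → E}
    (hcard : Fintype.card ι = Module.finrank ℝ E + 1) (hx : ¬AffineIndependent ℝ x) :
    μ (convexHull ℝ (Set.range x)) = 0 := by
  refine measure_mono_null (convexHull_subset_affineSpan _)
    (Measure.addHaar_affineSubspace μ _ fun htop => hx ?_)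
  rw [affineIndependent_iff_finrank_vectorSpan_eq ℝ x hcard, ← direction_affineSpan, htop,
    AffineSubspace.direction_top, finrank_top]

theorem map_bisection_addHaar (b : AffineBasis ι ℝ E) {i j : ι} (hij : i ≠ j) :
    μ.map (bisection b i j) = (2 : ENNReal) • μ := by
  have hdet := det_linear_bisection b hij
  rw [map_affineMap_addHaar_eq_smul_addHaar μ (by rw [hdet]; norm_num), hdet]
  norm_num

variable [Finite ι]

theorem measurableSet_convexHull_inter_coord_le (b : AffineBasis ι ℝ E) (i j : ι) :
    MeasurableSet (convexHull ℝ (Set.range b) ∩ {y | b.coord i y ≤ b.coord j y}) :=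
  (((Set.finite_range b).isCompact_convexHull ℝ).isClosed.inter (isClosed_le
    (continuous_barycentric_coord b i) (continuous_barycentric_coord b j))).measurableSet

theorem map_bisection_restrict_convexHull (b : AffineBasis ι ℝ E) {i j : ι} (hij : i ≠ j) :
    (μ.restrict (convexHull ℝ (Set.range b))).map (bisection b i j) =
      (2 : ENNReal) •
        μ.restrict (convexHull ℝ (Set.range b) ∩ {y | b.coord i y ≤ b.coord j y}) := by
  have hmap := Measure.restrict_map (μ := μ)
    (bisection b i j).continuous_of_finiteDimensional.measurable
    (measurableSet_convexHull_inter_coord_le b i j)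
  rw [bisection_preimage_half b hij, map_bisection_addHaar μ b hij] at hmap
  rw [← hmap, Measure.restrict_smul]

theorem two_smul_restrict_convexHull (b : AffineBasis ι ℝ E) {i j : ι} (hij : i ≠ j) :
    (2 : ENNReal) • μ.restrict (convexHull ℝ (Set.range b)) =
      (μ.restrict (convexHull ℝ (Set.range b))).map (bisection b i j) +
        (μ.restrict (convexHull ℝ (Set.range b))).map (bisection b j i) := by
  set τ := convexHull ℝ (Set.range b)
  have hunion : τ = (τ ∩ {y | b.coord i y ≤ b.coord j y}) ∪
      (τ ∩ {y | b.coord j y ≤ b.coord i y}) := by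
    rw [← Set.inter_union_distrib_left, eq_comm, Set.inter_eq_left]
    exact fun y _ => le_total (b.coord i y) (b.coord j y)
  have hne : b.coord i ≠ b.coord j := fun h => by
    simpa [b.coord_apply_ne hij.symm] using DFunLike.congr_fun h (b i)
  have hdisj : AEDisjoint μ (τ ∩ {y | b.coord i y ≤ b.coord j y})
      (τ ∩ {y | b.coord j y ≤ b.coord i y}) :=
    measure_mono_null (fun y hy => le_antisymm hy.1.2 hy.2.2) (addHaar_setOf_affineMap_eq μ hne)
  rw [map_bisection_restrict_convexHull μ b hij, map_bisection_restrict_convexHull μ b hij.symm,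
    ← smul_add, ← Measure.restrict_union₀ hdisj
      (measurableSet_convexHull_inter_coord_le b j i).nullMeasurableSet, ← hunion]

theorem two_smul_setIntegral_convexHull {F : Type*} [NormedAddCommGroup F] [NormedSpace ℝ F]
    (b : AffineBasis ι ℝ E) {i j : ι} (hij : i ≠ j) {f : E → F}
    (hf : IntegrableOn f (convexHull ℝ (Set.range b)) μ) :
    (2 : ℝ) • ∫ y in convexHull ℝ (Set.range b), f y ∂μ =
      (∫ y in convexHull ℝ (Set.range b), f (bisection b i j y) ∂μ) +
        ∫ y in convexHull ℝ (Set.range b), f (bisection b j i y) ∂μ := by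
  have hmeas (k l : ι) := (bisection b k l).continuous_of_finiteDimensional.aemeasurable
    (μ := μ.restrict (convexHull ℝ (Set.range b)))
  have hsum := hf.smul_measure ENNReal.ofNat_ne_top (c := 2)
  rw [two_smul_restrict_convexHull μ b hij] at hsum
  have hij' := hsum.left_of_add_measure
  have hji' := hsum.right_of_add_measure
  rw [← integral_map (hmeas i j) hij'.aestronglyMeasurable,
    ← integral_map (hmeas j i) hji'.aestronglyMeasurable, ← integral_add_measure hij' hji',
    ← two_smul_restrict_convexHull μ b hij, integral_smul_measure]
  rfl

end Measure

section MassMatrix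

variable {ι E : Type*} [NormedAddCommGroup E] [NormedSpace ℝ E] [MeasurableSpace E]

/-- The element mass matrix of finite element theory: the second moments of the barycentric
coordinates (the linear shape functions) over the simplex spanned by an affine basis. -/
noncomputable def massMatrix (μ : Measure E) (b : AffineBasis ι ℝ E) : Matrix ι ι ℝ :=
  Matrix.of fun i j => ∫ y in convexHull ℝ (Set.range b), b.coord i y * b.coord j y ∂μ

variable [FiniteDimensional ℝ E] [BorelSpace E]

theorem integrableOn_coord_mul_coord [Finite ι] (μ : Measure E) [IsFiniteMeasureOnCompacts μ]
    (b : AffineBasis ι ℝ E) (i j : ι) :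
    IntegrableOn (fun y => b.coord i y * b.coord j y) (convexHull ℝ (Set.range b)) μ :=
  ((continuous_barycentric_coord b i).mul (continuous_barycentric_coord b j)).continuousOn
    |>.integrableOn_compact ((Set.finite_range b).isCompact_convexHull ℝ)

theorem setIntegral_bilin_affineMap {F G H : Type*} [AddCommGroup F] [Module ℝ F]
    [AddCommGroup G] [Module ℝ G] [NormedAddCommGroup H] [NormedSpace ℝ H]
    [CompleteSpace H] [Fintype ι]
    (μ : Measure E) [IsFiniteMeasureOnCompacts μ] (B : F →ₗ[ℝ] G →ₗ[ℝ] H)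
    (b : AffineBasis ι ℝ E) (f : E →ᵃ[ℝ] F) (g : E →ᵃ[ℝ] G) :
    ∫ y in convexHull ℝ (Set.range b), B (f y) (g y) ∂μ =
      ∑ i, ∑ j, massMatrix μ b i j • B (f (b i)) (g (b j)) := by
  have hexpand (y : E) :
      B (f y) (g y) = ∑ i, ∑ j, (b.coord i y * b.coord j y) • B (f (b i)) (g (b j)) := by
    simp only [affineMap_eq_sum_coord_smul b f y, map_sum, map_smul, LinearMap.sum_apply,
      LinearMap.smul_apply]
    simp only [affineMap_eq_sum_coord_smul b g y, map_sum, map_smul, Finset.smul_sum, smul_smul]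
  have hint (i j : ι) := (integrableOn_coord_mul_coord μ b i j).smul_const (B (f (b i)) (g (b j)))
  simp only [hexpand]
  rw [integral_finsetSum _ fun i _ => integrable_finsetSum _ fun j _ => hint i j]
  simp only [integral_finsetSum _ fun j _ => hint _ j, integral_smul_const, massMatrix,
    Matrix.of_apply]

theorem sum_massMatrix [Fintype ι] (μ : Measure E) [IsFiniteMeasureOnCompacts μ]
    (b : AffineBasis ι ℝ E) :
    ∑ i, ∑ j, massMatrix μ b i j = μ.real (convexHull ℝ (Set.range b)) := by
  simpa using (setIntegral_bilin_affineMap μ (LinearMap.mul ℝ ℝ) b (AffineMap.const ℝ E 1)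
    (AffineMap.const ℝ E 1)).symm

variable (μ : Measure E) [μ.IsAddHaarMeasure]

theorem four_mul_massMatrix_of_ne [Finite ι] (b : AffineBasis ι ℝ E) {i j : ι} (hij : i ≠ j) :
    4 * massMatrix μ b i j = massMatrix μ b i i + massMatrix μ b j j := by
  have hint := integrableOn_coord_mul_coord μ b
  have hbisect := two_smul_setIntegral_convexHull μ b hij (hint i j)
  have hleft (y : E) : b.coord i y / 2 * (b.coord j y + b.coord i y / 2) =
      1 / 2 * (b.coord i y * b.coord j y) + 1 / 4 * (b.coord i y * b.coord i y) := by ring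
  have hright (y : E) : (b.coord i y + b.coord j y / 2) * (b.coord j y / 2) =
      1 / 2 * (b.coord i y * b.coord j y) + 1 / 4 * (b.coord j y * b.coord j y) := by ring
  simp only [coord_bisection_left b hij, coord_bisection_right b hij,
    coord_bisection_left b hij.symm, coord_bisection_right b hij.symm, hleft, hright] at hbisect
  rw [integral_add ((hint i j).const_mul _) ((hint i i).const_mul _),
    integral_add ((hint i j).const_mul _) ((hint j j).const_mul _)] at hbisect
  simp only [integral_const_mul, smul_eq_mul] at hbisect
  simp only [massMatrix, Matrix.of_apply]
  linarith

theorem massMatrix_self_eq [Finite ι] (b : AffineBasis ι ℝ E) (i j : ι) :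
    massMatrix μ b i i = massMatrix μ b j j := by
  rcases eq_or_ne i j with rfl | hij
  · rfl
  have hint := integrableOn_coord_mul_coord μ b
  have hbisect := two_smul_setIntegral_convexHull μ b hij (hint i i)
  have hleft (y : E) : b.coord i y / 2 * (b.coord i y / 2) =
      1 / 4 * (b.coord i y * b.coord i y) := by ring
  have hright (y : E) : (b.coord i y + b.coord j y / 2) * (b.coord i y + b.coord j y / 2) =
      b.coord i y * b.coord i y + b.coord i y * b.coord j y +
        1 / 4 * (b.coord j y * b.coord j y) := by ring
  simp only [coord_bisection_left b hij, coord_bisection_right b hij.symm, hleft, hright]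
    at hbisect
  have hsum : IntegrableOn (fun y => b.coord i y * b.coord i y + b.coord i y * b.coord j y)
      (convexHull ℝ (Set.range b)) μ := (hint i i).add (hint i j)
  rw [integral_add hsum ((hint j j).const_mul _),
    integral_add (hint i i) (hint i j)] at hbisect
  simp only [integral_const_mul, smul_eq_mul] at hbisect
  have hoff := four_mul_massMatrix_of_ne μ b hij
  simp only [massMatrix, Matrix.of_apply] at hoff ⊢
  linarith

theorem massMatrix_apply [Fintype ι] [DecidableEq ι] (b : AffineBasis ι ℝ E) (i j : ι) :
    massMatrix μ b i j =
      μ.real (convexHull ℝ (Set.range b)) / (Fintype.card ι * (Fintype.card ι + 1)) *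
        (1 + if i = j then 1 else 0) := by
  obtain ⟨c, hc⟩ : ∃ c : ℝ, ∀ k l, massMatrix μ b k l = c * (1 + if k = l then 1 else 0) := by
    refine ⟨massMatrix μ b i i / 2, fun k l => ?_⟩
    split_ifs with hkl
    · rw [hkl, massMatrix_self_eq μ b l i]
      ring
    · have hoff := four_mul_massMatrix_of_ne μ b hkl
      rw [massMatrix_self_eq μ b k i, massMatrix_self_eq μ b l i] at hoff
      linarith
  have hvol : c * (Fintype.card ι * (Fintype.card ι + 1)) =
      μ.real (convexHull ℝ (Set.range b)) := by
    rw [← sum_massMatrix]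
    simp only [hc, ← Finset.mul_sum, Finset.sum_add_distrib, Finset.sum_ite_eq,
      Finset.mem_univ, if_true, Finset.sum_const, Finset.card_univ, nsmul_eq_mul, mul_one]
    ring
  have hcard : (0 : ℝ) < Fintype.card ι := Nat.cast_pos.2 (Fintype.card_pos_iff.2 ⟨i⟩)
  rw [hc, ← hvol, mul_div_cancel_right₀ _ (by positivity)]

theorem setIntegral_bilin_affineMap_eq_sum_vertices {F G H : Type*} [AddCommGroup F] [Module ℝ F]
    [AddCommGroup G] [Module ℝ G] [NormedAddCommGroup H] [NormedSpace ℝ H]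
    [CompleteSpace H] [Fintype ι]
    (B : F →ₗ[ℝ] G →ₗ[ℝ] H) (b : AffineBasis ι ℝ E) (f : E →ᵃ[ℝ] F) (g : E →ᵃ[ℝ] G) :
    ∫ y in convexHull ℝ (Set.range b), B (f y) (g y) ∂μ =
      (μ.real (convexHull ℝ (Set.range b)) / (Fintype.card ι * (Fintype.card ι + 1))) •
        (∑ i, B (f (b i)) (g (b i)) + B (∑ i, f (b i)) (∑ i, g (b i))) := by
  classical
  have hprod : B (∑ i, f (b i)) (∑ i, g (b i)) = ∑ i, ∑ j, B (f (b i)) (g (b j)) := by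
    simp only [map_sum, LinearMap.sum_apply]
    exact Finset.sum_comm
  simp only [setIntegral_bilin_affineMap, massMatrix_apply, mul_smul, ← Finset.smul_sum, add_smul,
    one_smul, ite_smul, zero_smul, Finset.sum_add_distrib, Finset.sum_ite_eq, Finset.mem_univ,
    if_true, hprod, add_comm]

end MassMatrix

theorem mass_matrix_formula_affine_general {ι E F G H : Type*} [Fintype ι]
    [NormedAddCommGroup E] [NormedSpace ℝ E] [FiniteDimensional ℝ E] [MeasurableSpace E]
    [BorelSpace E] [AddCommGroup F] [Module ℝ F] [AddCommGroup G] [Module ℝ G]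
    [NormedAddCommGroup H] [NormedSpace ℝ H] [CompleteSpace H] (μ : Measure E) [μ.IsAddHaarMeasure]
    (B : F →ₗ[ℝ] G →ₗ[ℝ] H) (x : ι → E) (hcard : Fintype.card ι = Module.finrank ℝ E + 1)
    (f : E →ᵃ[ℝ] F) (g : E →ᵃ[ℝ] G) :
    ∫ y in convexHull ℝ (Set.range x), B (f y) (g y) ∂μ =
      (μ.real (convexHull ℝ (Set.range x)) /
          (((Module.finrank ℝ E : ℝ) + 1) * ((Module.finrank ℝ E : ℝ) + 2))) •
        (∑ i, B (f (x i)) (g (x i)) + B (∑ i, f (x i)) (∑ i, g (x i))) := by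
  by_cases hx : AffineIndependent ℝ x
  · let b : AffineBasis ι ℝ E :=
      ⟨x, hx, hx.affineSpan_eq_top_iff_card_eq_finrank_add_one.2 hcard⟩
    have hb := setIntegral_bilin_affineMap_eq_sum_vertices μ B b f g
    rwa [hcard, Nat.cast_add_one, add_assoc (Module.finrank ℝ E : ℝ) 1 1,
      one_add_one_eq_two] at hb
  · have hzero := addHaar_convexHull_range_of_not_affineIndependent μ hcard hx
    rw [setIntegral_measure_zero _ hzero, measureReal_def, hzero, ENNReal.toReal_zero, zero_div,
      zero_smul]

/-- Element mass-matrix formula for an affine function on a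
nondegenerate `d`-simplex `τ = conv{x_1, …, x_{d+1}}` in `ℝ^d`:
`∫_τ g² = (|τ| / ((d+1)(d+2))) · (∑ g(xᵢ)² + (∑ g(xᵢ))²)`. -/
theorem mass_matrix_formula_affine
    (d : ℕ) (hd : 1 ≤ d)
    (x : Fin (d + 1) → EuclideanSpace ℝ (Fin d))
    (hx : AffineIndependent ℝ x)
    (τ : Set (EuclideanSpace ℝ (Fin d)))
    (hτ : τ = convexHull ℝ (Set.range x))
    (g : EuclideanSpace ℝ (Fin d) →ᵃ[ℝ] ℝ) :
    ∫ y in τ, (g y) ^ 2 =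
      (volume τ).toReal / (((d : ℝ) + 1) * ((d : ℝ) + 2)) *
        ((∑ i, (g (x i)) ^ 2) + (∑ i, g (x i)) ^ 2) := by
  simpa only [sq, hτ, measureReal_def, finrank_euclideanSpace_fin, LinearMap.mul_apply',
    smul_eq_mul] using
    mass_matrix_formula_affine_general volume (LinearMap.mul ℝ ℝ) x (by simp) g g
end

section
/- Let a, b, c, d ∈ ℝ³ be affinely independent, let τ = conv{a,b,c,d}, and for vertices x, y write m_{xy} = (x+y)/2 for the edge midpoint. Consider the eight tetrahedra of regular (red) refinement with the diagonal of the interior octahedron chosen as the segment from m_{ab} to m_{cd}: the four corner tetrahedra T₁ = conv{a, m_{ab}, m_{ac}, m_{ad}}, T₂ = conv{b, m_{ab}, m_{bc}, m_{bd}}, T₃ = conv{c, m_{ac}, m_{bc}, m_{cd}}, T₄ = conv{d, m_{ad}, m_{bd}, m_{cd}}, and the four interior tetrahedra T₅ = conv{m_{ab}, m_{cd}, m_{ac}, m_{bc}}, T₆ = conv{m_{ab}, m_{cd}, m_{bc}, m_{bd}}, T₇ = conv{m_{ab}, m_{cd}, m_{bd}, m_{ad}}, T₈ = conv{m_{ab},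 m_{cd}, m_{ad}, m_{ac}}. Then: (i) T₁ ∪ ⋯ ∪ T₈ = τ; (ii) the topological interiors of T₁, …, T₈ are pairwise disjoint; (iii) each Tᵢ has Lebesgue volume equal to (1/8)·vol(τ); and (iv) each corner tetrahedron Tᵢ (i = 1,…,4) is the image of τ under the homothety with ratio 1/2 centered at the corresponding vertex. -/
open MeasureTheory

/-!
Writing `x = α a + β b + γ c + δ d` in barycentric coordinates, a coordinate that is at least `1/2`
puts `x` in the corner child at that vertex; if there is none, `x` lies in the central octahedron,
where the larger of `|α - β|` and `|γ - δ|` and its sign select the child.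
So the children cover the tetrahedron. Each has one eighth of its volume, so the covering has
no volume to spare: overlaps are null sets, and a null set has empty interior.
-/

section MeasureOverlap

variable {X ι : Type*} [MeasurableSpace X] {μ : Measure X}

lemma pairwise_aedisjoint_of_tsum_measure_le_measure_iUnion [Countable ι] {s : ι → Set X}
    (hs : ∀ i, NullMeasurableSet (s i) μ) (hfin : μ (⋃ i, s i) ≠ ⊤)
    (hle : ∑' i, μ (s i) ≤ μ (⋃ i, s i)) : Pairwise (Function.onFun (AEDisjoint μ) s) := by
  classical
  intro i j hij
  -- Removing `s i` from `s j` keeps the union and lowers the sum of the measures by the overlap.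
  let s' := Function.update s j (s j \ s i)
  have hs'_self : s' j = s j \ s i := Function.update_self ..
  have hs'_of_ne {k : ι} (hkj : k ≠ j) : s' k = s k := Function.update_of_ne hkj ..
  have hcover : ⋃ k, s k ⊆ ⋃ k, s' k := by
    refine Set.iUnion_subset fun k x hx => Set.mem_iUnion.mpr ?_
    by_cases hxi : x ∈ s i
    · exact ⟨i, by rwa [hs'_of_ne hij]⟩
    obtain rfl | hkj := eq_or_ne k j
    · exact ⟨k, by rw [hs'_self]; exact ⟨hx, hxi⟩⟩
    · exact ⟨k, by rwa [hs'_of_ne hkj]⟩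
  have hsplit (k : ι) : μ (s k) = μ (s' k) + if k = j then μ (s i ∩ s j) else 0 := by
    obtain rfl | hkj := eq_or_ne k j
    · rw [hs'_self, if_pos rfl, Set.inter_comm, add_comm, measure_inter_add_sdiff₀ _ (hs i)]
    · rw [hs'_of_ne hkj, if_neg hkj, add_zero]
  have hsum : ∑' k, μ (s k) = ∑' k, μ (s' k) + μ (s i ∩ s j) := by
    rw [tsum_congr hsplit, ENNReal.tsum_add, tsum_ite_eq]
  have hoverlap : μ (⋃ k, s k) + μ (s i ∩ s j) ≤ μ (⋃ k, s k) + 0 :=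
    calc μ (⋃ k, s k) + μ (s i ∩ s j) ≤ ∑' k, μ (s' k) + μ (s i ∩ s j) := by
          gcongr
          exact (measure_mono hcover).trans (measure_iUnion_le s')
      _ ≤ μ (⋃ k, s k) + 0 := by rwa [← hsum, add_zero]
  exact nonpos_iff_eq_zero.mp ((ENNReal.add_le_add_iff_left hfin).mp hoverlap)

lemma disjoint_interior_of_aedisjoint [TopologicalSpace X] [μ.IsOpenPosMeasure] {s t : Set X}
    (h : AEDisjoint μ s t) : Disjoint (interior s) (interior t) := by
  rw [Set.disjoint_iff_inter_eq_empty, ← interior_inter]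
  exact Measure.interior_eq_empty_of_null h.eq

end MeasureOverlap

section Hull

variable {𝕜 E ι : Type*} [Field 𝕜] [LinearOrder 𝕜] [IsStrictOrderedRing 𝕜] [AddCommGroup E]
  [Module 𝕜 E] [Fintype ι]

lemma mem_convexHull_range_iff_exists_stdSimplex {p : ι → E} {x : E} :
    x ∈ convexHull 𝕜 (Set.range p) ↔ ∃ w ∈ stdSimplex 𝕜 ι, ∑ i, w i • p i = x := by
  classical
  have hrange : Set.range p =
      Fintype.linearCombination 𝕜 p '' Set.range fun i => Pi.single i (1 : 𝕜) := by
    rw [← Set.range_comp]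
    congr 1
    ext i
    simp
  rw [hrange, ← LinearMap.image_convexHull, convexHull_rangle_single_eq_stdSimplex]
  simp only [Set.mem_image, Fintype.linearCombination_apply]

lemma sum_smul_mem_image_homothety_convexHull {p : ι → E} {w : ι → 𝕜} (hw : w ∈ stdSimplex 𝕜 ι)
    {k : ι} {t : 𝕜} (ht : 0 < t) (hk : 1 - t ≤ w k) :
    ∑ i, w i • p i ∈ AffineMap.homothety (p k) t '' convexHull 𝕜 (Set.range p) := by
  classical
  refine ⟨t⁻¹ • (∑ i, w i • p i - (1 - t) • p k),
    mem_convexHull_range_iff_exists_stdSimplex.mpr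
      ⟨fun i => t⁻¹ * (w i - if i = k then 1 - t else 0), ⟨fun i => ?_, ?_⟩, ?_⟩, ?_⟩
  · refine mul_nonneg (inv_nonneg.mpr ht.le) (sub_nonneg.mpr ?_)
    split_ifs with hik
    · rwa [hik]
    · exact hw.1 i
  · rw [← Finset.mul_sum, Finset.sum_sub_distrib, hw.2, Finset.sum_ite_eq' Finset.univ k,
      if_pos (Finset.mem_univ k), sub_sub_cancel, inv_mul_cancel₀ ht.ne']
  · simp only [mul_smul, sub_smul, ite_smul, zero_smul, ← Finset.smul_sum,
      Finset.sum_sub_distrib, Finset.sum_ite_eq', Finset.mem_univ, if_true]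
  · rw [AffineMap.homothety_apply, vsub_eq_sub, vadd_eq_add, smul_sub, smul_inv_smul₀ ht.ne']
    module

end Hull

section Volume

open scoped Pointwise

variable {E ι : Type*} [NormedAddCommGroup E] [NormedSpace ℝ E] [MeasurableSpace E] [BorelSpace E]
  [Fintype ι] [DecidableEq ι] (μ : Measure E) [μ.IsAddHaarMeasure]

lemma addHaar_convexHull_insert_range (v : Module.Basis ι ℝ E) (x : E) (p : ι → E) :
    μ (convexHull ℝ (insert x (Set.range p))) =
      ENNReal.ofReal |v.det fun i => p i - x| * μ (convexHull ℝ (insert 0 (Set.range v))) := by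
  have : FiniteDimensional ℝ E := v.finiteDimensional_of_finite
  let L : E →ₗ[ℝ] E := v.constr ℝ fun i => p i - x
  have hLv : L ∘ v = fun i => p i - x := funext fun i => v.constr_basis ℝ _ i
  have hdet : LinearMap.det L = v.det fun i => p i - x := by
    rw [← hLv, v.det_comp, v.det_self, mul_one]
  have himage : insert x (Set.range p) = x +ᵥ L '' insert 0 (Set.range v) := by
    rw [← Set.image_vadd, Set.image_insert_eq, Set.image_insert_eq, map_zero, vadd_eq_add, add_zero,
      ← Set.range_comp, ← Set.range_comp, hLv]
    simp only [Function.comp_def, vadd_eq_add, add_sub_cancel]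
  rw [himage, convexHull_vadd, measure_vadd, ← LinearMap.image_convexHull,
    Measure.addHaar_image_linearMap, hdet]

end Volume

lemma range_vecCons_four {α : Type*} (a b c d : α) : Set.range ![a, b, c, d] = {a, b, c, d} := by
  simp only [Matrix.range_cons, Matrix.range_empty, Set.union_empty, Set.singleton_union]

section Affine

variable {E : Type*} [AddCommGroup E] [Module ℝ E]

/-- The eight children of the red refinement of `conv {a, b, c, d}` along the diagonal from `m_{ab}`
to `m_{cd}`: the corner children at `a, b, c, d`, indexed by `0, ..., 3`, and then the children of
the central octahedron in their cyclic order around the diagonal. -/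
noncomputable def redChild (a b c d : E) : Fin 8 → Set E := ![
  convexHull ℝ {a, midpoint ℝ a b, midpoint ℝ a c, midpoint ℝ a d},
  convexHull ℝ {b, midpoint ℝ a b, midpoint ℝ b c, midpoint ℝ b d},
  convexHull ℝ {c, midpoint ℝ a c, midpoint ℝ b c, midpoint ℝ c d},
  convexHull ℝ {d, midpoint ℝ a d, midpoint ℝ b d, midpoint ℝ c d},
  convexHull ℝ {midpoint ℝ a b, midpoint ℝ c d, midpoint ℝ a c, midpoint ℝ b c},
  convexHull ℝ {midpoint ℝ a b, midpoint ℝ c d, midpoint ℝ b c, midpoint ℝ b d},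
  convexHull ℝ {midpoint ℝ a b, midpoint ℝ c d, midpoint ℝ b d, midpoint ℝ a d},
  convexHull ℝ {midpoint ℝ a b, midpoint ℝ c d, midpoint ℝ a d, midpoint ℝ a c}]

/-- The child of the central octahedron spanned by its diagonal from `m_{ab}` to `m_{cd}` and by the
midpoints of the edges from `c` to `a` and `b`. Permuting the vertices in a way that preserves the
diagonal yields the other three. -/
noncomputable def octahedronChild (a b c d : E) : Set E :=
  convexHull ℝ {midpoint ℝ a b, midpoint ℝ c d, midpoint ℝ a c, midpoint ℝ b c}

lemma image_homothety_one_half_convexHull (x : E) (s : Set E) :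
    AffineMap.homothety x (1 / 2 : ℝ) '' convexHull ℝ s = convexHull ℝ (midpoint ℝ x '' s) := by
  rw [AffineMap.image_convexHull]
  simp only [homothety_one_half]

lemma redChild_eq_homothety_octahedronChild (a b c d : E) :
    redChild a b c d = ![
      AffineMap.homothety a (1 / 2 : ℝ) '' convexHull ℝ {a, b, c, d},
      AffineMap.homothety b (1 / 2 : ℝ) '' convexHull ℝ {a, b, c, d},
      AffineMap.homothety c (1 / 2 : ℝ) '' convexHull ℝ {a, b, c, d},
      AffineMap.homothety d (1 / 2 : ℝ) '' convexHull ℝ {a, b, c, d},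
      octahedronChild a b c d, octahedronChild c d b a,
      octahedronChild a b d c, octahedronChild c d a b] := by
  simp only [redChild, octahedronChild, image_homothety_one_half_convexHull, Set.image_insert_eq,
    Set.image_singleton, midpoint_self, midpoint_comm (x := b) (y := a),
    midpoint_comm (x := c) (y := a), midpoint_comm (x := c) (y := b),
    midpoint_comm (x := d) (y := a), midpoint_comm (x := d) (y := b),
    midpoint_comm (x := d) (y := c)]
  funext i
  fin_cases i <;> refine congrArg (convexHull (E := E) ℝ) ?_ <;> grind

lemma redChild_subset_convexHull (a b c d : E) (i : Fin 8) :
    redChild a b c d i ⊆ convexHull ℝ {a, b, c, d} := by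
  have ha : a ∈ convexHull ℝ {a, b, c, d} := subset_convexHull ℝ _ (by simp)
  have hb : b ∈ convexHull ℝ {a, b, c, d} := subset_convexHull ℝ _ (by simp)
  have hc : c ∈ convexHull ℝ {a, b, c, d} := subset_convexHull ℝ _ (by simp)
  have hd : d ∈ convexHull ℝ {a, b, c, d} := subset_convexHull ℝ _ (by simp)
  have hmid {x y : E} (hx : x ∈ convexHull ℝ {a, b, c, d}) (hy : y ∈ convexHull ℝ {a, b, c, d}) :
      midpoint ℝ x y ∈ convexHull ℝ {a, b, c, d} :=
    Convex.midpoint_mem (convex_convexHull ℝ _) hx hy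
  fin_cases i <;> refine convexHull_min ?_ (convex_convexHull ℝ _) <;>
    simp only [Set.insert_subset_iff, Set.singleton_subset_iff, ha, hb, hc, hd, hmid, and_self]

lemma sum_smul_mem_octahedronChild {a b c d : E} {α β γ δ : ℝ} (hδ : 0 ≤ δ) (hγ : γ ≤ 1 / 2)
    (hsum : α + β + γ + δ = 1) (hdiff : |α - β| ≤ γ - δ) :
    α • a + β • b + γ • c + δ • d ∈ octahedronChild a b c d := by
  obtain ⟨hβα, hαβ⟩ := abs_le.mp hdiff
  rw [octahedronChild, ← range_vecCons_four, mem_convexHull_range_iff_exists_stdSimplex]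
  refine ⟨![1 - 2 * γ, 2 * δ, (γ - δ) + (α - β), (γ - δ) - (α - β)], ⟨?_, ?_⟩, ?_⟩
  · intro i
    fin_cases i <;> dsimp <;> linarith
  · simp only [Fin.sum_univ_four, Matrix.cons_val]
    linarith
  · obtain rfl : α = 1 - β - γ - δ := by linarith
    simp only [Fin.sum_univ_four, Matrix.cons_val, midpoint_eq_smul_add, invOf_eq_inv]
    module

lemma sum_smul_mem_iUnion_redChild_of_le_half (a b c d : E) {w : Fin 4 → ℝ}
    (hw : w ∈ stdSimplex ℝ (Fin 4)) (hhalf : ∀ i, w i ≤ 1 / 2) :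
    ∑ i, w i • ![a, b, c, d] i ∈ ⋃ i, redChild a b c d i := by
  have hsum := hw.2
  rw [redChild_eq_homothety_octahedronChild, Set.mem_iUnion]
  simp only [Fin.sum_univ_four, Matrix.cons_val] at hsum ⊢
  rcases le_total |w 0 - w 1| |w 2 - w 3| with hle | hle
  · rcases le_total (w 3) (w 2) with h32 | h23
    · rw [abs_of_nonneg (sub_nonneg.mpr h32)] at hle
      exact ⟨4, sum_smul_mem_octahedronChild (hw.1 3) (hhalf 2) hsum hle⟩
    · rw [abs_sub_comm (w 2), abs_of_nonneg (sub_nonneg.mpr h23)] at hle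
      exact ⟨6, Set.mem_of_eq_of_mem (add_right_comm ..)
        (sum_smul_mem_octahedronChild (hw.1 2) (hhalf 3) (by linarith) hle)⟩
  · rcases le_total (w 1) (w 0) with h10 | h01
    · rw [abs_of_nonneg (sub_nonneg.mpr h10)] at hle
      refine ⟨7, Set.mem_of_eq_of_mem ?_
        (sum_smul_mem_octahedronChild (hw.1 1) (hhalf 0) (by linarith) hle)⟩
      module
    · rw [abs_sub_comm (w 0), abs_of_nonneg (sub_nonneg.mpr h01)] at hle
      refine ⟨5, Set.mem_of_eq_of_mem ?_
        (sum_smul_mem_octahedronChild (hw.1 0) (hhalf 1) (by linarith) hle)⟩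
      module

lemma convexHull_subset_iUnion_redChild (a b c d : E) :
    convexHull ℝ {a, b, c, d} ⊆ ⋃ i, redChild a b c d i := by
  intro x hx
  rw [← range_vecCons_four, mem_convexHull_range_iff_exists_stdSimplex] at hx
  obtain ⟨w, hw, rfl⟩ := hx
  by_cases hhalf : ∀ i, w i ≤ 1 / 2
  · exact sum_smul_mem_iUnion_redChild_of_le_half a b c d hw hhalf
  · push Not at hhalf
    obtain ⟨k, hk⟩ := hhalf
    have hmem := sum_smul_mem_image_homothety_convexHull (p := ![a, b, c, d]) hw
      one_half_pos ((sub_half 1).trans_le hk.le)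
    rw [range_vecCons_four] at hmem
    rw [redChild_eq_homothety_octahedronChild, Set.mem_iUnion]
    refine ⟨Fin.castAdd 4 k, ?_⟩
    fin_cases k <;> exact hmem

lemma iUnion_redChild (a b c d : E) : ⋃ i, redChild a b c d i = convexHull ℝ {a, b, c, d} :=
  (Set.iUnion_subset (redChild_subset_convexHull a b c d)).antisymm
    (convexHull_subset_iUnion_redChild a b c d)

lemma basis_det_midpoint_sub_midpoint (v : Module.Basis (Fin 3) ℝ E) (a b c d : E) :
    (v.det fun i => ![midpoint ℝ c d, midpoint ℝ a c, midpoint ℝ b c] i - midpoint ℝ a b) =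
      -(v.det fun i => ![b, c, d] i - a) / 8 := by
  simp only [v.det_apply, Matrix.det_fin_three, v.toMatrix_apply, midpoint_eq_smul_add,
    invOf_eq_inv, Matrix.cons_val, map_sub, map_add, map_smul, Finsupp.coe_sub, Finsupp.coe_add,
    Finsupp.coe_smul, Pi.sub_apply, Pi.add_apply, Pi.smul_apply, smul_eq_mul]
  ring

end Affine

section Measure

variable {E : Type*} [NormedAddCommGroup E] [NormedSpace ℝ E]

lemma isCompact_redChild (a b c d : E) (i : Fin 8) : IsCompact (redChild a b c d i) := by
  fin_cases i <;> exact (Set.toFinite _).isCompact_convexHull ℝ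

variable [MeasurableSpace E] [BorelSpace E] (μ : Measure E) [μ.IsAddHaarMeasure]

lemma addHaar_image_homothety_one_half [FiniteDimensional ℝ E] (x : E) (s : Set E) :
    μ (AffineMap.homothety x (1 / 2 : ℝ) '' s) = μ s / 2 ^ Module.finrank ℝ E := by
  rw [Measure.addHaar_image_homothety, abs_of_pos (by positivity), one_div, inv_pow,
    ENNReal.ofReal_inv_of_pos (by positivity), ENNReal.ofReal_pow zero_le_two,
    ENNReal.ofReal_ofNat, ENNReal.div_eq_inv_mul]

lemma addHaar_octahedronChild (hE : Module.finrank ℝ E = 3) (a b c d : E) :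
    μ (octahedronChild a b c d) = μ (convexHull ℝ {a, b, c, d}) / 8 := by
  have : FiniteDimensional ℝ E := Module.finite_of_finrank_eq_succ hE
  let v : Module.Basis (Fin 3) ℝ E := Module.finBasisOfFinrankEq ℝ E hE
  have hvol (x p q r : E) := by
    simpa only [Matrix.range_cons, Matrix.range_empty, Set.union_empty, Set.singleton_union] using
      addHaar_convexHull_insert_range μ v x ![p, q, r]
  rw [octahedronChild, hvol, hvol a, basis_det_midpoint_sub_midpoint, abs_div, abs_neg,
    ENNReal.ofReal_div_of_pos (by norm_num), abs_of_pos (by norm_num : (0 : ℝ) < 8),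
    ENNReal.ofReal_ofNat, ENNReal.mul_div_right_comm]

lemma addHaar_redChild (hE : Module.finrank ℝ E = 3) (a b c d : E) (i : Fin 8) :
    μ (redChild a b c d i) = μ (convexHull ℝ {a, b, c, d}) / 8 := by
  have : FiniteDimensional ℝ E := Module.finite_of_finrank_eq_succ hE
  have hcorner (x : E) : μ (AffineMap.homothety x (1 / 2 : ℝ) '' convexHull ℝ {a, b, c, d}) =
      μ (convexHull ℝ {a, b, c, d}) / 8 := by
    rw [addHaar_image_homothety_one_half, hE]
    norm_num
  have hcdba : ({c, d, b, a} : Set E) = {a, b, c, d} := by grind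
  have habdc : ({a, b, d, c} : Set E) = {a, b, c, d} := by grind
  have hcdab : ({c, d, a, b} : Set E) = {a, b, c, d} := by grind
  rw [redChild_eq_homothety_octahedronChild]
  fin_cases i
  · exact hcorner a
  · exact hcorner b
  · exact hcorner c
  · exact hcorner d
  · exact addHaar_octahedronChild μ hE a b c d
  · exact hcdba ▸ addHaar_octahedronChild μ hE c d b a
  · exact habdc ▸ addHaar_octahedronChild μ hE a b d c
  · exact hcdab ▸ addHaar_octahedronChild μ hE c d a b

lemma disjoint_interior_redChild (hE : Module.finrank ℝ E = 3) (a b c d : E) {i j : Fin 8}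
    (hij : i ≠ j) : Disjoint (interior (redChild a b c d i)) (interior (redChild a b c d j)) := by
  have : FiniteDimensional ℝ E := Module.finite_of_finrank_eq_succ hE
  let μ : Measure E := Measure.addHaar
  have hfin : μ (convexHull ℝ {a, b, c, d}) ≠ ⊤ :=
    ((Set.toFinite _).isCompact_convexHull ℝ).measure_ne_top
  have hsum : ∑' i, μ (redChild a b c d i) = μ (convexHull ℝ {a, b, c, d}) := by
    simp only [addHaar_redChild μ hE, tsum_fintype, Finset.sum_const, Finset.card_univ,
      Fintype.card_fin, nsmul_eq_mul, Nat.cast_ofNat]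
    exact ENNReal.mul_div_cancel (by norm_num) ENNReal.ofNat_ne_top
  refine disjoint_interior_of_aedisjoint (μ := μ)
    (pairwise_aedisjoint_of_tsum_measure_le_measure_iUnion (fun k => ?_) ?_ ?_ hij)
  · exact (isCompact_redChild a b c d k).measurableSet.nullMeasurableSet
  · rwa [iUnion_redChild]
  · rw [hsum, iUnion_redChild]

end Measure

theorem red_refinement_tetrahedron_general {E : Type*} [NormedAddCommGroup E] [NormedSpace ℝ E]
    [MeasurableSpace E] [BorelSpace E] (μ : Measure E) [μ.IsAddHaarMeasure]
    (hE : Module.finrank ℝ E = 3) (a b c d : E) :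
    (⋃ i, redChild a b c d i) = convexHull ℝ {a, b, c, d} ∧
      (∀ i j, i ≠ j →
        Disjoint (interior (redChild a b c d i)) (interior (redChild a b c d j))) ∧
      (∀ i, μ (redChild a b c d i) = μ (convexHull ℝ {a, b, c, d}) / 8) ∧
      (redChild a b c d 0 = AffineMap.homothety a (1 / 2 : ℝ) '' convexHull ℝ {a, b, c, d} ∧
        redChild a b c d 1 = AffineMap.homothety b (1 / 2 : ℝ) '' convexHull ℝ {a, b, c, d} ∧
        redChild a b c d 2 = AffineMap.homothety c (1 / 2 : ℝ) '' convexHull ℝ {a, b, c, d} ∧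
        redChild a b c d 3 = AffineMap.homothety d (1 / 2 : ℝ) '' convexHull ℝ {a, b, c, d}) := by
  refine ⟨iUnion_redChild a b c d, fun i j => disjoint_interior_redChild hE a b c d,
    addHaar_redChild μ hE a b c d, ?_⟩
  rw [redChild_eq_homothety_octahedronChild]
  exact ⟨rfl, rfl, rfl, rfl⟩

/-- Regular (red) refinement of a nondegenerate tetrahedron
`τ = conv{a,b,c,d}` in `ℝ³` with the interior-octahedron diagonal from
`m_{ab}` to `m_{cd}`: the eight children cover `τ`, have pairwise disjoint
interiors, each has volume `vol(τ)/8`, and each corner child is the image of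
`τ` under the homothety of ratio `1/2` centered at the corresponding vertex. -/
theorem red_refinement_tetrahedron
    (a b c d : EuclideanSpace ℝ (Fin 3))
    (h : AffineIndependent ℝ ![a, b, c, d])
    (T : Fin 8 → Set (EuclideanSpace ℝ (Fin 3)))
    (hT : T = ![
      convexHull ℝ {a, midpoint ℝ a b, midpoint ℝ a c, midpoint ℝ a d},
      convexHull ℝ {b, midpoint ℝ a b, midpoint ℝ b c, midpoint ℝ b d},
      convexHull ℝ {c, midpoint ℝ a c, midpoint ℝ b c, midpoint ℝ c d},
      convexHull ℝ {d, midpoint ℝ a d, midpoint ℝ b d, midpoint ℝ c d},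
      convexHull ℝ {midpoint ℝ a b, midpoint ℝ c d, midpoint ℝ a c, midpoint ℝ b c},
      convexHull ℝ {midpoint ℝ a b, midpoint ℝ c d, midpoint ℝ b c, midpoint ℝ b d},
      convexHull ℝ {midpoint ℝ a b, midpoint ℝ c d, midpoint ℝ b d, midpoint ℝ a d},
      convexHull ℝ {midpoint ℝ a b, midpoint ℝ c d, midpoint ℝ a d, midpoint ℝ a c}]) :
    (⋃ i, T i) = convexHull ℝ {a, b, c, d} ∧
      (∀ i j, i ≠ j → Disjoint (interior (T i)) (interior (T j))) ∧
      (∀ i, volume (T i) = volume (convexHull ℝ {a, b, c, d}) / 8) ∧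
      (T 0 = AffineMap.homothety a (1 / 2 : ℝ) '' convexHull ℝ {a, b, c, d} ∧
        T 1 = AffineMap.homothety b (1 / 2 : ℝ) '' convexHull ℝ {a, b, c, d} ∧
        T 2 = AffineMap.homothety c (1 / 2 : ℝ) '' convexHull ℝ {a, b, c, d} ∧
        T 3 = AffineMap.homothety d (1 / 2 : ℝ) '' convexHull ℝ {a, b, c, d}) := by
  subst hT
  exact red_refinement_tetrahedron_general volume finrank_euclideanSpace_fin a b c d
end
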